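/- There exists a universal constant C > 0 such that the following holds. Let n ≥ 1, d ≥ 1, let P be a polynomial of degree at most d on {-1,1}^n, let X be uniformly distributed on {-1,1}^n, and for r > 0 let a_r be an e^{-r}-quantile of P(X). Then for all real r ≥ 1, a_{r+1} - a_r ≤ C^d · (r/d + 1)^{d/2 - 1} · (E|P(X)|^2)^{1/2}. -/

import Mathlib

open Classical

/-- Expectation with respect to the uniform measure on the discrete cube `{-1,1}^n`,
encoded as `Fin n → Bool` (`true ↦ 1`, `false ↦ -1`). -/
noncomputable def cubeE (n : ℕ) (f : (Fin n → Bool) → ℝ) : ℝ :=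
  (∑ x : Fin n → Bool, f x) / 2 ^ n

/-- The real value of a coordinate of the cube: `true ↦ 1`, `false ↦ -1`. -/
def cubeSign (b : Bool) : ℝ := if b then 1 else -1

/-- `P` is (the restriction to the cube of) a multilinear polynomial of degree at most `d`:
`P x = ∑_{#S ≤ d} a_S ∏_{i ∈ S} x_i`. -/
def IsPolyDeg (n d : ℕ) (P : (Fin n → Bool) → ℝ) : Prop :=
  ∃ a : Finset (Fin n) → ℝ,
    (∀ S : Finset (Fin n), d < S.card → a S = 0) ∧
    ∀ x, P x = ∑ S : Finset (Fin n), a S * ∏ i ∈ S, cubeSign (x i)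

/-- Probability (uniform measure) of a set of points of the cube. -/
noncomputable def cubePr (n : ℕ) (A : Set (Fin n → Bool)) : ℝ :=
  (∑ x : Fin n → Bool, if x ∈ A then (1 : ℝ) else 0) / 2 ^ n

/-- `a` is an `e^{-r}`-quantile of `P(X)`:
`ℙ(P(X) ≥ a) ≥ e^{-r}` and `ℙ(P(X) ≤ a) ≥ 1 - e^{-r}`. -/
def IsQuantile (n : ℕ) (P : (Fin n → Bool) → ℝ) (r a : ℝ) : Prop :=
  Real.exp (-r) ≤ cubePr n {x | a ≤ P x} ∧ 1 - Real.exp (-r) ≤ cubePr n {x | P x ≤ a}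

/-- Discrete partial derivative: `∂_i f(x) = (f(T_i^1 x) - f(T_i^{-1} x))/2`. -/
noncomputable def discDeriv (n : ℕ) (f : (Fin n → Bool) → ℝ) (i : Fin n)
    (x : Fin n → Bool) : ℝ :=
  (f (Function.update x i true) - f (Function.update x i false)) / 2

/-- Squared norm of the discrete gradient: `|∇f(x)|² = ∑_i |∂_i f(x)|²`. -/
noncomputable def gradSq (n : ℕ) (f : (Fin n → Bool) → ℝ) (x : Fin n → Bool) : ℝ :=
  ∑ i : Fin n, (discDeriv n f i x) ^ 2

/-!
Truncate `P` between consecutive quantiles: `f = min (P - a_r)⁺ (a_{r+1} - a_r)`. Since `f` is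
supported on `{P > a_r}`, an event of probability at most `e^{-r}`, the entropy of `f²` is at least
`r 𝔼 f² ≥ r e^{-(r+1)} (a_{r+1} - a_r)²`, while the logarithmic Sobolev inequality bounds it by a
multiple of `𝔼 𝟙_{P > a_r} |∇P|²`. The partial derivatives of `P` have degree at most `d - 1`, so
Hölder's inequality with exponent `k = ⌈r/d⌉` and hypercontractivity bound the latter by
`e^{-r(1 - 1/k)} d (2k - 1)^{d-1} 𝔼 P²`. This choice of `k` makes `e^{r/k} ≤ e^d`, so the
factors `e^{±r}` cancel up to `C^d`.
-/

open Finset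
open scoped BigOperators

variable {n : ℕ}

/-! ### Expectations over the cube -/

lemma cubeE_eq_expect (f : (Fin n → Bool) → ℝ) : cubeE n f = 𝔼 x, f x := by
  simp [cubeE, Fintype.expect_eq_sum_div_card]

lemma cubePr_eq_expect_indicator (A : Set (Fin n → Bool)) :
    cubePr n A = 𝔼 x, A.indicator 1 x := by
  simp [cubePr, Fintype.expect_eq_sum_div_card, Set.indicator_apply]

lemma cubePr_nonneg (A : Set (Fin n → Bool)) : 0 ≤ cubePr n A := by
  rw [cubePr_eq_expect_indicator]
  exact expect_nonneg fun x _ ↦ Set.indicator_nonneg (fun _ _ ↦ zero_le_one) x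

lemma cubePr_compl (A : Set (Fin n → Bool)) : cubePr n Aᶜ = 1 - cubePr n A := by
  simp only [cubePr_eq_expect_indicator, Set.indicator_compl, Pi.sub_apply, Pi.one_apply,
    expect_sub_distrib, Fintype.expect_const]

lemma expect_cube_succ (F : (Fin (n + 1) → Bool) → ℝ) :
    𝔼 x, F x = 𝔼 x : Fin n → Bool, (F (Fin.cons true x) + F (Fin.cons false x)) / 2 := by
  rw [← Fintype.expect_equiv (Fin.consEquiv fun _ : Fin (n + 1) ↦ Bool)
    (fun p ↦ F (Fin.cons p.1 p.2)) F fun _ ↦ rfl, ← univ_product_univ,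
    expect_product' univ univ fun b x ↦ F (Fin.cons b x), expect_comm]
  refine expect_congr rfl fun x _ ↦ ?_
  rw [Fintype.expect_eq_sum_div_card, Fintype.sum_bool, Fintype.card_bool, Nat.cast_two]

lemma expect_update_true_add_update_false (i : Fin n) (F : (Fin n → Bool) → ℝ) :
    𝔼 x, (F (Function.update x i true) + F (Function.update x i false)) = 2 * 𝔼 x, F x := by
  have flip_involutive :
      Function.Involutive fun x : Fin n → Bool ↦ Function.update x i (!x i) := fun x ↦ by simp
  have expect_flip : 𝔼 x : Fin n → Bool, F (Function.update x i (!x i)) = 𝔼 x, F x :=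
    Fintype.expect_bijective _ flip_involutive.bijective _ _ fun _ ↦ rfl
  have update_add_update (x : Fin n → Bool) :
      F (Function.update x i true) + F (Function.update x i false) =
        F x + F (Function.update x i (!x i)) := by
    have update_self : Function.update x i (x i) = x := Function.update_eq_self i x
    cases hx : x i <;> rw [hx] at update_self <;> simp [update_self, add_comm]
  simp only [update_add_update, expect_add_distrib, expect_flip, two_mul]

lemma expect_rpow_add_le {α : Type*} [Fintype α] {p : ℝ} (hp : 1 ≤ p) {u v : α → ℝ}
    (hu : ∀ x, 0 ≤ u x) (hv : ∀ x, 0 ≤ v x) :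
    (𝔼 x, (u x + v x) ^ p) ^ p⁻¹ ≤ (𝔼 x, u x ^ p) ^ p⁻¹ + (𝔼 x, v x ^ p) ^ p⁻¹ := by
  have sum_rpow_nonneg {w : α → ℝ} (hw : ∀ x, 0 ≤ w x) : 0 ≤ ∑ x, w x ^ p :=
    sum_nonneg fun x _ ↦ Real.rpow_nonneg (hw x) p
  simp only [Fintype.expect_eq_sum_div_card]
  rw [Real.div_rpow (sum_rpow_nonneg fun x ↦ add_nonneg (hu x) (hv x)) (Nat.cast_nonneg _),
    Real.div_rpow (sum_rpow_nonneg hu) (Nat.cast_nonneg _),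
    Real.div_rpow (sum_rpow_nonneg hv) (Nat.cast_nonneg _), ← add_div]
  gcongr
  simpa only [one_div] using Real.Lp_add_le_of_nonneg univ hp (fun x _ ↦ hu x) fun x _ ↦ hv x

/-! ### Walsh expansions -/

/-- The multilinear polynomial `∑_S a_S ∏_{i ∈ S} x_i` on the cube, given by its Fourier–Walsh
coefficients `a`. -/
noncomputable def walshSum (a : Finset (Fin n) → ℝ) (x : Fin n → Bool) : ℝ :=
  ∑ S, a S * ∏ i ∈ S, cubeSign (x i)

/-- The Fourier–Walsh coefficients of the `i`-th discrete derivative of `walshSum a`. -/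
def walshDeriv (a : Finset (Fin n) → ℝ) (i : Fin n) (S : Finset (Fin n)) : ℝ :=
  if i ∈ S then 0 else a (insert i S)

lemma sum_notMem_insert_eq_sum_mem {ι M : Type*} [Fintype ι] [DecidableEq ι] [AddCommMonoid M]
    (i : ι) (F : Finset ι → M) : ∑ S with i ∉ S, F (insert i S) = ∑ S with i ∈ S, F S :=
  sum_nbij' (insert i) (fun S ↦ S.erase i) (by simp) (by simp) (by simp +contextual)
    (by simp +contextual) (by simp)

lemma sum_finset_fin_succ {M : Type*} [AddCommMonoid M] (F : Finset (Fin (n + 1)) → M) :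
    ∑ S, F S = ∑ S : Finset (Fin n), F (S.map (Fin.succEmb n)) +
      ∑ S : Finset (Fin n), F (insert 0 (S.map (Fin.succEmb n))) := by
  have sum_notMem (G : Finset (Fin (n + 1)) → M) :
      ∑ S with 0 ∉ S, G S = ∑ S : Finset (Fin n), G (S.map (Fin.succEmb n)) := by
    refine (sum_nbij (Finset.map (Fin.succEmb n)) (by simp) (map_injective _).injOn ?_
      fun _ _ ↦ rfl).symm
    intro S hS
    refine ⟨univ.filter fun i ↦ i.succ ∈ S, mem_coe.2 (mem_univ _), ?_⟩
    ext i
    cases i using Fin.cases <;> simp_all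
  rw [← sum_filter_add_sum_filter_not univ (fun S ↦ (0 : Fin (n + 1)) ∈ S) F,
    ← sum_notMem_insert_eq_sum_mem, sum_notMem, sum_notMem, add_comm]

lemma walshSum_cons (a : Finset (Fin (n + 1)) → ℝ) (b : Bool) (x : Fin n → Bool) :
    walshSum a (Fin.cons b x) =
      walshSum (fun S ↦ a (S.map (Fin.succEmb n))) x +
        cubeSign b * walshSum (fun S ↦ a (insert 0 (S.map (Fin.succEmb n)))) x := by
  simp only [walshSum, sum_finset_fin_succ, mul_sum]
  congr 1 <;> refine sum_congr rfl fun S _ ↦ ?_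
  · simp
  · rw [prod_insert (by simp)]
    simp [mul_left_comm]

lemma expect_walshSum_sq (a : Finset (Fin n) → ℝ) : 𝔼 x, walshSum a x ^ 2 = ∑ S, a S ^ 2 := by
  induction n with
  | zero => simp [walshSum, Subsingleton.elim default ∅]
  | succ n ih =>
    rw [expect_cube_succ, sum_finset_fin_succ, ← ih, ← ih, ← expect_add_distrib]
    refine expect_congr rfl fun x _ ↦ ?_
    simp only [walshSum_cons, cubeSign, if_true, Bool.false_eq_true, if_false]
    ring

lemma prod_cubeSign_update_of_mem {S : Finset (Fin n)} {i : Fin n} (hi : i ∈ S)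
    (x : Fin n → Bool) (b : Bool) :
    ∏ j ∈ S, cubeSign (Function.update x i b j) =
      cubeSign b * ∏ j ∈ S.erase i, cubeSign (x j) := by
  rw [← mul_prod_erase _ _ hi, Function.update_self]
  congr 1
  exact prod_congr rfl fun j hj ↦ by rw [Function.update_of_ne (ne_of_mem_erase hj)]

lemma prod_cubeSign_update_of_notMem {S : Finset (Fin n)} {i : Fin n} (hi : i ∉ S)
    (x : Fin n → Bool) (b : Bool) :
    ∏ j ∈ S, cubeSign (Function.update x i b j) = ∏ j ∈ S, cubeSign (x j) :=
  prod_congr rfl fun j hj ↦ by rw [Function.update_of_ne (ne_of_mem_of_not_mem hj hi)]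

lemma discDeriv_prod_cubeSign (S : Finset (Fin n)) (i : Fin n) (x : Fin n → Bool) :
    discDeriv n (fun y ↦ ∏ j ∈ S, cubeSign (y j)) i x =
      if i ∈ S then ∏ j ∈ S.erase i, cubeSign (x j) else 0 := by
  split_ifs with hi
  · simp only [discDeriv, prod_cubeSign_update_of_mem hi]
    simp [cubeSign]
  · simp only [discDeriv, prod_cubeSign_update_of_notMem hi, sub_self, zero_div]

lemma discDeriv_walshSum (a : Finset (Fin n) → ℝ) (i : Fin n) :
    discDeriv n (walshSum a) i = walshSum (walshDeriv a i) := by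
  funext x
  calc discDeriv n (walshSum a) i x
      = ∑ S, a S * discDeriv n (fun y ↦ ∏ j ∈ S, cubeSign (y j)) i x := by
        simp only [discDeriv, walshSum, ← sum_sub_distrib, sum_div, ← mul_sub, mul_div_assoc]
    _ = ∑ S with i ∈ S, a S * ∏ j ∈ S.erase i, cubeSign (x j) := by
        simp only [discDeriv_prod_cubeSign, mul_ite, mul_zero, sum_filter]
    _ = ∑ S with i ∉ S, a (insert i S) * ∏ j ∈ S, cubeSign (x j) := by
        rw [← sum_notMem_insert_eq_sum_mem]
        refine sum_congr rfl fun S hS ↦ ?_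
        rw [erase_insert (mem_filter.1 hS).2]
    _ = walshSum (walshDeriv a i) x := by
        simp only [walshSum, walshDeriv, ite_mul, zero_mul, sum_filter, ite_not]

lemma sum_sum_mul_walshDeriv_sq (w : ℕ → ℝ) (a : Finset (Fin n) → ℝ) :
    ∑ i, ∑ S, w #S * walshDeriv a i S ^ 2 = ∑ S, #S * (w (#S - 1) * a S ^ 2) := by
  have sum_walshDeriv (i : Fin n) :
      ∑ S, w #S * walshDeriv a i S ^ 2 = ∑ S with i ∈ S, w (#S - 1) * a S ^ 2 := by
    rw [← sum_notMem_insert_eq_sum_mem, sum_filter]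
    refine sum_congr rfl fun S _ ↦ ?_
    by_cases hi : i ∈ S <;> simp [walshDeriv, hi]
  simp only [sum_walshDeriv, sum_filter]
  rw [sum_comm]
  simp

/-! ### Hypercontractivity -/

lemma choose_two_mul_two_mul_le (k j : ℕ) :
    (2 * k).choose (2 * j) ≤ k.choose j * (2 * k - 1) ^ j := by
  induction j with
  | zero => simp
  | succ j ih =>
    have choose_succ_succ_right : (2 * k).choose (2 * j + 2) * ((2 * j + 2) * (2 * j + 1)) =
        (2 * k).choose (2 * j) * ((2 * k - 2 * j) * (2 * k - (2 * j + 1))) := by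
      rw [← mul_assoc, Nat.choose_succ_right_eq, mul_right_comm, Nat.choose_succ_right_eq,
        mul_assoc]
    refine Nat.le_of_mul_le_mul_right ?_ (show 0 < 2 * j + 2 by positivity)
    calc (2 * k).choose (2 * j + 2) * (2 * j + 2)
        ≤ (2 * k).choose (2 * j + 2) * ((2 * j + 2) * (2 * j + 1)) := by
          gcongr
          exact Nat.le_mul_of_pos_right _ (Nat.succ_pos _)
      _ = (2 * k).choose (2 * j) * ((2 * k - 2 * j) * (2 * k - (2 * j + 1))) :=
          choose_succ_succ_right
      _ ≤ k.choose j * (2 * k - 1) ^ j * (2 * (k - j) * (2 * k - 1)) := by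
          gcongr <;> omega
      _ = 2 * (k.choose j * (k - j)) * (2 * k - 1) ^ (j + 1) := by ring
      _ = k.choose (j + 1) * (2 * k - 1) ^ (j + 1) * (2 * j + 2) := by
          rw [← Nat.choose_succ_right_eq]
          ring

lemma sum_range_two_mul_add_one {M : Type*} [AddCommMonoid M] (f : ℕ → M) (k : ℕ) :
    ∑ m ∈ range (2 * k + 1), f m =
      ∑ j ∈ range (k + 1), f (2 * j) + ∑ j ∈ range k, f (2 * j + 1) := by
  induction k with
  | zero => simp
  | succ k ih =>
    rw [show 2 * (k + 1) + 1 = 2 * k + 1 + 1 + 1 by ring, sum_range_succ, sum_range_succ, ih,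
      sum_range_succ _ (k + 1), sum_range_succ (fun j ↦ f (2 * j + 1)), mul_add_one]
    abel

lemma add_pow_add_sub_pow_two_mul {K : Type*} [Field K] [NeZero (2 : K)] (A B : K)
    (k : ℕ) :
    ((A + B) ^ (2 * k) + (A - B) ^ (2 * k)) / 2 =
      ∑ j ∈ range (k + 1), (2 * k).choose (2 * j) * (B ^ (2 * j) * A ^ (2 * k - 2 * j)) := by
  have odd_neg_pow (j : ℕ) : (-B) ^ (2 * j + 1) = -B ^ (2 * j + 1) := Odd.neg_pow ⟨j, rfl⟩ B
  have even_neg_pow (j : ℕ) : (-B) ^ (2 * j) = B ^ (2 * j) := (even_two_mul j).neg_pow B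
  rw [sub_eq_neg_add, add_comm A B, add_pow, add_pow, sum_range_two_mul_add_one,
    sum_range_two_mul_add_one]
  simp only [odd_neg_pow, even_neg_pow, neg_mul, sum_neg_distrib]
  rw [add_add_add_comm, add_neg_cancel, add_zero, ← two_mul, mul_div_cancel_left₀ _ two_ne_zero]
  exact sum_congr rfl fun j _ ↦ mul_comm _ _

lemma two_point_hypercontractive (A B : ℝ) (k : ℕ) :
    ((A + B) ^ (2 * k) + (A - B) ^ (2 * k)) / 2 ≤ (A ^ 2 + (2 * k - 1) * B ^ 2) ^ k := by
  rcases Nat.eq_zero_or_pos k with rfl | hk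
  · simp
  rw [add_pow_add_sub_pow_two_mul, add_comm (A ^ 2), add_pow]
  refine sum_le_sum fun j _ ↦ ?_
  have choose_le : ((2 * k).choose (2 * j) : ℝ) ≤ k.choose j * (2 * k - 1) ^ j := by
    have := choose_two_mul_two_mul_le k j
    rify [show 1 ≤ 2 * k by omega] at this
    exact this
  calc (2 * k).choose (2 * j) * (B ^ (2 * j) * A ^ (2 * k - 2 * j))
      = (2 * k).choose (2 * j) * ((B ^ 2) ^ j * (A ^ 2) ^ (k - j)) := by
        rw [← Nat.mul_sub, pow_mul, pow_mul]
    _ ≤ k.choose j * (2 * k - 1) ^ j * ((B ^ 2) ^ j * (A ^ 2) ^ (k - j)) := by gcongr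
    _ = ((2 * k - 1) * B ^ 2) ^ j * (A ^ 2) ^ (k - j) * k.choose j := by
        rw [mul_pow]
        ring

lemma expect_walshSum_pow_rpow_inv_le {k : ℕ} (hk : k ≠ 0) (a : Finset (Fin n) → ℝ) :
    (𝔼 x, walshSum a x ^ (2 * k)) ^ (k : ℝ)⁻¹ ≤ ∑ S, (2 * k - 1 : ℝ) ^ #S * a S ^ 2 := by
  have one_le_k : (1 : ℝ) ≤ k := Nat.one_le_cast.2 (Nat.one_le_iff_ne_zero.2 hk)
  have weight_nonneg : (0 : ℝ) ≤ 2 * k - 1 := by linarith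
  induction n with
  | zero =>
    simp [walshSum, Subsingleton.elim default ∅, pow_mul, Real.pow_rpow_inv_natCast, sq_nonneg, hk]
  | succ n ih =>
    set evenPart := walshSum fun S ↦ a (S.map (Fin.succEmb n))
    set oddPart := walshSum fun S ↦ a (insert 0 (S.map (Fin.succEmb n)))
    have expect_le : 𝔼 x, walshSum a x ^ (2 * k) ≤
        𝔼 x, (evenPart x ^ 2 + (2 * k - 1) * oddPart x ^ 2) ^ (k : ℝ) := by
      rw [expect_cube_succ]
      refine expect_le_expect fun x _ ↦ ?_
      have := two_point_hypercontractive (evenPart x) (oddPart x) k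
      simpa [walshSum_cons, cubeSign, sub_eq_add_neg] using this
    calc (𝔼 x, walshSum a x ^ (2 * k)) ^ (k : ℝ)⁻¹
        ≤ (𝔼 x, (evenPart x ^ 2 + (2 * k - 1) * oddPart x ^ 2) ^ (k : ℝ)) ^ (k : ℝ)⁻¹ := by
          refine Real.rpow_le_rpow (expect_nonneg fun x _ ↦ ?_) expect_le (by positivity)
          exact (even_two_mul k).pow_nonneg _
      _ ≤ (𝔼 x, (evenPart x ^ 2) ^ (k : ℝ)) ^ (k : ℝ)⁻¹ +
            (𝔼 x, ((2 * k - 1) * oddPart x ^ 2) ^ (k : ℝ)) ^ (k : ℝ)⁻¹ :=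
          expect_rpow_add_le one_le_k (fun _ ↦ by positivity) fun _ ↦ by positivity
      _ = (𝔼 x, evenPart x ^ (2 * k)) ^ (k : ℝ)⁻¹ +
            (2 * k - 1) * (𝔼 x, oddPart x ^ (2 * k)) ^ (k : ℝ)⁻¹ := by
          simp only [Real.rpow_natCast, mul_pow, ← pow_mul, ← mul_expect]
          rw [Real.mul_rpow (by positivity)
            (expect_nonneg fun x _ ↦ (even_two_mul k).pow_nonneg _),
            Real.pow_rpow_inv_natCast weight_nonneg hk]
      _ ≤ _ := by
          rw [sum_finset_fin_succ]
          refine add_le_add ((ih _).trans_eq ?_)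
            ((mul_le_mul_of_nonneg_left (ih _) weight_nonneg).trans_eq ?_)
          · simp only [card_map]
          · simp [mul_sum, card_insert_of_notMem, pow_succ', mul_assoc]

lemma expect_indicator_mul_walshSum_sq_le {k : ℕ} (hk : k ≠ 0) (a : Finset (Fin n) → ℝ)
    (A : Set (Fin n → Bool)) :
    𝔼 x, A.indicator 1 x * walshSum a x ^ 2 ≤
      cubePr n A ^ (1 - (k : ℝ)⁻¹) * ∑ S, (2 * k - 1 : ℝ) ^ #S * a S ^ 2 := by
  have indicator_nonneg (x : Fin n → Bool) : (0 : ℝ) ≤ A.indicator 1 x :=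
    Set.indicator_nonneg (fun _ _ ↦ zero_le_one) x
  have one_le_k : (1 : ℝ) ≤ k := Nat.one_le_cast.2 (Nat.one_le_iff_ne_zero.2 hk)
  have pow_nonneg (x : Fin n → Bool) : 0 ≤ walshSum a x ^ (2 * k) := (even_two_mul k).pow_nonneg _
  refine (Real.compact_inner_le_weight_mul_Lp_of_nonneg univ one_le_k indicator_nonneg
    fun x ↦ sq_nonneg (walshSum a x)).trans ?_
  rw [← cubePr_eq_expect_indicator]
  simp only [Real.rpow_natCast, ← pow_mul]
  refine mul_le_mul_of_nonneg_left ?_ (Real.rpow_nonneg (cubePr_nonneg A) _)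
  refine le_trans ?_ (expect_walshSum_pow_rpow_inv_le hk a)
  refine Real.rpow_le_rpow (expect_nonneg fun x _ ↦ mul_nonneg (indicator_nonneg x) (pow_nonneg x))
    (expect_le_expect fun x _ ↦ mul_le_of_le_one_left (pow_nonneg x) ?_) (by positivity)
  exact Set.indicator_le_self' (fun _ _ ↦ zero_le_one) x

lemma expect_indicator_mul_gradSq_le {d k : ℕ} (hk : k ≠ 0) {P : (Fin n → Bool) → ℝ}
    (hP : IsPolyDeg n d P) (A : Set (Fin n → Bool)) :
    𝔼 x, A.indicator 1 x * gradSq n P x ≤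
      cubePr n A ^ (1 - (k : ℝ)⁻¹) * (d * (2 * k - 1 : ℝ) ^ (d - 1) * 𝔼 x, P x ^ 2) := by
  obtain ⟨a, ha, hPa⟩ := hP
  obtain rfl : P = walshSum a := funext hPa
  have one_le_weight : (1 : ℝ) ≤ 2 * k - 1 := by
    have : (1 : ℝ) ≤ k := Nat.one_le_cast.2 (Nat.one_le_iff_ne_zero.2 hk)
    linarith
  calc 𝔼 x, A.indicator 1 x * gradSq n (walshSum a) x
      = ∑ i, 𝔼 x, A.indicator 1 x * walshSum (walshDeriv a i) x ^ 2 := by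
        simp only [gradSq, discDeriv_walshSum, mul_sum, expect_sum_comm]
    _ ≤ ∑ i, cubePr n A ^ (1 - (k : ℝ)⁻¹) * ∑ S, (2 * k - 1 : ℝ) ^ #S * walshDeriv a i S ^ 2 :=
        sum_le_sum fun i _ ↦ expect_indicator_mul_walshSum_sq_le hk _ A
    _ = cubePr n A ^ (1 - (k : ℝ)⁻¹) * ∑ S, #S * ((2 * k - 1 : ℝ) ^ (#S - 1) * a S ^ 2) := by
        rw [← mul_sum, sum_sum_mul_walshDeriv_sq]
    _ ≤ cubePr n A ^ (1 - (k : ℝ)⁻¹) * ∑ S, d * (2 * k - 1 : ℝ) ^ (d - 1) * a S ^ 2 := by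
        refine mul_le_mul_of_nonneg_left (sum_le_sum fun S _ ↦ ?_)
          (Real.rpow_nonneg (cubePr_nonneg A) _)
        rcases lt_or_ge d #S with hS | hS
        · simp [ha S hS]
        · rw [mul_assoc]
          gcongr
    _ = _ := by rw [← mul_sum, expect_walshSum_sq]

/-! ### The logarithmic Sobolev inequality -/

section Entropy

variable {α : Type*} [Fintype α]

/-- The entropy `𝔼 f log f - 𝔼 f log 𝔼 f` of a nonnegative function under the uniform
distribution on a finite type, with the convention `0 log 0 = 0`. -/
noncomputable def entropy (f : α → ℝ) : ℝ :=
  𝔼 x, f x * Real.log (f x) - (𝔼 x, f x) * Real.log (𝔼 x, f x)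

lemma mul_log_tangent_le {c t : ℝ} (hc : 0 < c) (ht : 0 ≤ t) :
    (Real.log c + 1) * t - c ≤ t * Real.log t := by
  rcases ht.eq_or_lt with rfl | t_pos
  · simpa using hc.le
  have log_div_le := Real.log_le_sub_one_of_pos (div_pos hc t_pos)
  rw [Real.log_div hc.ne' t_pos.ne'] at log_div_le
  have := mul_le_mul_of_nonneg_left log_div_le ht
  rw [mul_sub_one, mul_div_cancel₀ _ t_pos.ne'] at this
  linarith

lemma mul_expect_le_entropy {f : α → ℝ} (hf : 0 ≤ f) {A : Set α} (hfA : ∀ x ∉ A, f x = 0)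
    {r : ℝ} (hA : 𝔼 x, A.indicator 1 x ≤ Real.exp (-r)) : r * 𝔼 x, f x ≤ entropy f := by
  rcases (expect_nonneg fun x _ ↦ hf x : 0 ≤ 𝔼 x, f x).eq_or_lt with mean_eq_zero | mean_pos
  · obtain rfl := (Fintype.expect_eq_zero_iff_of_nonneg hf).1 mean_eq_zero.symm
    simp [entropy]
  set m := 𝔼 x, f x with hm
  -- The tangent line of `t ↦ t * log t` at `m * exp r`, which is the mean of `f` conditioned on `A`
  -- when `A` has probability exactly `exp (-r)`.
  have tangent_le (x : α) : (Real.log m + r + 1) * f x - m * Real.exp r * A.indicator 1 x ≤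
      f x * Real.log (f x) := by
    by_cases hx : x ∈ A
    · have := mul_log_tangent_le (mul_pos mean_pos (Real.exp_pos r)) (hf x)
      rw [Real.log_mul mean_pos.ne' (Real.exp_pos r).ne', Real.log_exp] at this
      simpa [hx] using this
    · simp [hfA x hx, hx]
  have mass_le : m * Real.exp r * 𝔼 x, A.indicator 1 x ≤ m :=
    calc m * Real.exp r * 𝔼 x, A.indicator 1 x ≤ m * Real.exp r * Real.exp (-r) := by gcongr
      _ = m := by rw [mul_assoc, ← Real.exp_add, add_neg_cancel, Real.exp_zero, mul_one]
  have integrated := expect_le_expect fun x (_ : x ∈ univ) ↦ tangent_le x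
  rw [expect_sub_distrib, ← mul_expect, ← mul_expect, ← hm] at integrated
  rw [entropy, ← hm]
  linarith

lemma sq_sub_expect_sq_div_le (u v : α → ℝ) :
    (𝔼 x, u x ^ 2 - 𝔼 x, v x ^ 2) ^ 2 / (2 * (𝔼 x, u x ^ 2 + 𝔼 x, v x ^ 2)) ≤
      𝔼 x, (u x - v x) ^ 2 := by
  have expect_add_sq_le : 𝔼 x, (u x + v x) ^ 2 ≤ 2 * (𝔼 x, u x ^ 2 + 𝔼 x, v x ^ 2) := by
    rw [← expect_add_distrib, mul_expect]
    exact expect_le_expect fun x _ ↦ add_sq_le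
  refine div_le_of_le_mul₀ (by positivity) (by positivity) ?_
  calc (𝔼 x, u x ^ 2 - 𝔼 x, v x ^ 2) ^ 2 = (𝔼 x, (u x - v x) * (u x + v x)) ^ 2 := by
        rw [← expect_sub_distrib]
        congr! 2 with x
        ring
    _ ≤ (𝔼 x, (u x - v x) ^ 2) * 𝔼 x, (u x + v x) ^ 2 := expect_mul_sq_le_sq_mul_sq _ _ _
    _ ≤ (𝔼 x, (u x - v x) ^ 2) * (2 * (𝔼 x, u x ^ 2 + 𝔼 x, v x ^ 2)) := by gcongr

end Entropy

lemma two_point_entropy_le {a b : ℝ} (ha : 0 ≤ a) (hb : 0 ≤ b) :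
    (a * Real.log a + b * Real.log b) / 2 - (a + b) / 2 * Real.log ((a + b) / 2) ≤
      (a - b) ^ 2 / (2 * (a + b)) := by
  rcases (add_nonneg ha hb).eq_or_lt with sum_eq_zero | sum_pos
  · obtain rfl : a = 0 := by linarith
    obtain rfl : b = 0 := by linarith
    simp
  set m := (a + b) / 2 with hm
  have m_pos : 0 < m := by positivity
  have mul_log_le {c : ℝ} (hc : 0 ≤ c) : c * Real.log c ≤ c * Real.log m + c * (c / m - 1) := by
    rcases hc.eq_or_lt with rfl | c_pos
    · simp
    rw [← mul_add]
    have := Real.log_le_sub_one_of_pos (div_pos c_pos m_pos)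
    rw [Real.log_div c_pos.ne' m_pos.ne'] at this
    gcongr
    linarith
  calc (a * Real.log a + b * Real.log b) / 2 - m * Real.log m
      ≤ (a * Real.log m + a * (a / m - 1) + (b * Real.log m + b * (b / m - 1))) / 2 -
          m * Real.log m := by
        gcongr <;> exact mul_log_le ‹_›
    _ = (a * (a / m - 1) + b * (b / m - 1)) / 2 := by
        rw [hm]
        ring
    _ = (a - b) ^ 2 / (2 * (a + b)) := by
        rw [hm]
        field_simp
        ring

lemma entropy_cube_succ (f : (Fin (n + 1) → Bool) → ℝ) :
    entropy f =
      (entropy (fun x ↦ f (Fin.cons true x)) + entropy (fun x ↦ f (Fin.cons false x))) / 2 +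
        (((𝔼 x, f (Fin.cons true x)) * Real.log (𝔼 x, f (Fin.cons true x)) +
            (𝔼 x, f (Fin.cons false x)) * Real.log (𝔼 x, f (Fin.cons false x))) / 2 -
          (𝔼 x, f (Fin.cons true x) + 𝔼 x, f (Fin.cons false x)) / 2 *
            Real.log ((𝔼 x, f (Fin.cons true x) + 𝔼 x, f (Fin.cons false x)) / 2)) := by
  simp only [entropy, expect_cube_succ, ← expect_div, expect_add_distrib]
  ring

lemma gradSq_cons (f : (Fin (n + 1) → Bool) → ℝ) (b : Bool) (x : Fin n → Bool) :
    gradSq (n + 1) f (Fin.cons b x) =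
      ((f (Fin.cons true x) - f (Fin.cons false x)) / 2) ^ 2 +
        gradSq n (fun y ↦ f (Fin.cons b y)) x := by
  simp only [gradSq, discDeriv, Fin.sum_univ_succ, Fin.update_cons_zero, Fin.cons_update]

lemma expect_gradSq_succ (f : (Fin (n + 1) → Bool) → ℝ) :
    𝔼 x, gradSq (n + 1) f x =
      (𝔼 x : Fin n → Bool, (f (Fin.cons true x) - f (Fin.cons false x)) ^ 2) / 4 +
        (𝔼 x, gradSq n (fun y ↦ f (Fin.cons true y)) x +
          𝔼 x, gradSq n (fun y ↦ f (Fin.cons false y)) x) / 2 := by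
  rw [expect_cube_succ, ← expect_add_distrib, expect_div, expect_div, ← expect_add_distrib]
  refine expect_congr rfl fun x _ ↦ ?_
  rw [gradSq_cons, gradSq_cons]
  ring

theorem entropy_sq_le (f : (Fin n → Bool) → ℝ) :
    entropy (fun x ↦ f x ^ 2) ≤ 4 * 𝔼 x, gradSq n f x := by
  induction n with
  | zero => simp [entropy, gradSq]
  | succ n ih =>
    set f₁ : (Fin n → Bool) → ℝ := fun x ↦ f (Fin.cons true x)
    set f₀ : (Fin n → Bool) → ℝ := fun x ↦ f (Fin.cons false x)
    have two_point := (two_point_entropy_le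
      (by positivity : 0 ≤ 𝔼 x, f₁ x ^ 2) (by positivity : 0 ≤ 𝔼 x, f₀ x ^ 2)).trans
      (sq_sub_expect_sq_div_le f₁ f₀)
    rw [entropy_cube_succ, expect_gradSq_succ]
    linarith [ih f₁, ih f₀]

/-! ### Truncation at quantiles -/

lemma sq_sub_le_indicator_of_lipschitzWith_one {φ : ℝ → ℝ} (hφ : LipschitzWith 1 φ) {a : ℝ}
    (hφa : ∀ t ≤ a, φ t = 0) (p q : ℝ) :
    (φ p - φ q) ^ 2 ≤
      ((Set.Ioi a).indicator 1 p + (Set.Ioi a).indicator 1 q) * (p - q) ^ 2 := by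
  have sq_le : (φ p - φ q) ^ 2 ≤ (p - q) ^ 2 :=
    sq_le_sq.2 (by simpa [Real.dist_eq] using hφ.dist_le_mul p q)
  by_cases hp : a < p <;> by_cases hq : a < q
  · simp only [Set.mem_Ioi, hp, hq, Set.indicator_of_mem, Pi.one_apply]
    linarith [sq_nonneg (p - q)]
  · simpa [hp, hq] using sq_le
  · simpa [hp, hq] using sq_le
  · simp [hp, hq, hφa p (not_lt.1 hp), hφa q (not_lt.1 hq)]

lemma discDeriv_update (f : (Fin n → Bool) → ℝ) (i : Fin n) (x : Fin n → Bool) (b : Bool) :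
    discDeriv n f i (Function.update x i b) = discDeriv n f i x := by
  simp [discDeriv]

lemma expect_gradSq_comp_le {φ : ℝ → ℝ} (hφ : LipschitzWith 1 φ) {a : ℝ}
    (hφa : ∀ t ≤ a, φ t = 0) (P : (Fin n → Bool) → ℝ) :
    𝔼 x, gradSq n (φ ∘ P) x ≤ 2 * 𝔼 x, {x | a < P x}.indicator 1 x * gradSq n P x := by
  simp only [gradSq, mul_sum, expect_sum_comm]
  refine sum_le_sum fun i _ ↦ ?_
  rw [← expect_update_true_add_update_false i]
  refine expect_le_expect fun x _ ↦ ?_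
  rw [discDeriv_update, discDeriv_update, ← add_mul]
  have := sq_sub_le_indicator_of_lipschitzWith_one hφ hφa
    (P (Function.update x i true)) (P (Function.update x i false))
  rw [discDeriv, discDeriv, div_pow, div_pow, ← mul_div_assoc]
  gcongr
  exact this

lemma cubePr_lt_le_of_isQuantile {P : (Fin n → Bool) → ℝ} {r a : ℝ} (ha : IsQuantile n P r a) :
    cubePr n {x | a < P x} ≤ Real.exp (-r) := by
  have compl_eq : {x | a < P x} = {x | P x ≤ a}ᶜ := by
    ext x
    simp
  rw [compl_eq, cubePr_compl]
  linarith [ha.2]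

lemma mul_exp_mul_sq_quantile_sub_le {P : (Fin n → Bool) → ℝ} {r s a b : ℝ} (hr : 0 ≤ r)
    (ha : IsQuantile n P r a) (hb : IsQuantile n P s b) (hab : a ≤ b) :
    r * (Real.exp (-s) * (b - a) ^ 2) ≤
      8 * 𝔼 x, {x | a < P x}.indicator 1 x * gradSq n P x := by
  set φ : ℝ → ℝ := fun t ↦ min (max (t - a) 0) (b - a) with hφ
  have lipschitz_φ : LipschitzWith 1 φ :=
    ((LipschitzWith.of_dist_le_mul fun s t ↦ by simp [Real.dist_eq]).max_const 0).min_const _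
  have φ_eq_zero : ∀ t ≤ a, φ t = 0 := fun t ht ↦ by simp [hφ, ht, hab]
  have φ_eq_sub : ∀ t ≥ b, φ t = b - a := fun t ht ↦
    min_eq_right (le_max_of_le_left (by linarith))
  have second_moment_ge : Real.exp (-s) * (b - a) ^ 2 ≤ 𝔼 x, φ (P x) ^ 2 := by
    calc Real.exp (-s) * (b - a) ^ 2 ≤ cubePr n {x | b ≤ P x} * (b - a) ^ 2 := by
          gcongr
          exact hb.1
      _ ≤ 𝔼 x, φ (P x) ^ 2 := by
          rw [cubePr_eq_expect_indicator, expect_mul]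
          refine expect_le_expect fun x _ ↦ ?_
          by_cases hx : b ≤ P x
          · simp [hx, φ_eq_sub]
          · simp [hx, sq_nonneg]
  calc r * (Real.exp (-s) * (b - a) ^ 2) ≤ r * 𝔼 x, φ (P x) ^ 2 := by gcongr
    _ ≤ entropy fun x ↦ φ (P x) ^ 2 :=
        mul_expect_le_entropy (fun x ↦ sq_nonneg _)
          (fun x hx ↦ by simp [φ_eq_zero _ (not_lt.1 hx)])
          (cubePr_eq_expect_indicator {x | a < P x} ▸ cubePr_lt_le_of_isQuantile ha)
    _ ≤ 4 * 𝔼 x, gradSq n (φ ∘ P) x := entropy_sq_le _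
    _ ≤ 8 * 𝔼 x, {x | a < P x}.indicator 1 x * gradSq n P x := by
        linarith [expect_gradSq_comp_le lipschitz_φ φ_eq_zero P]

lemma mul_sq_quantile_sub_le {d k : ℕ} (hk : k ≠ 0) {P : (Fin n → Bool) → ℝ}
    (hP : IsPolyDeg n d P) {r a b : ℝ} (hr : 0 ≤ r) (hrk : r ≤ d * k)
    (ha : IsQuantile n P r a) (hb : IsQuantile n P (r + 1) b) (hab : a ≤ b) :
    r * (b - a) ^ 2 ≤
      8 * Real.exp (d + 1) * (d * (2 * k - 1 : ℝ) ^ (d - 1) * 𝔼 x, P x ^ 2) := by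
  have one_le_k : (1 : ℝ) ≤ k := Nat.one_le_cast.2 (Nat.one_le_iff_ne_zero.2 hk)
  have weight_nonneg : (0 : ℝ) ≤ 2 * k - 1 := by linarith
  have cubePr_rpow_le : cubePr n {x | a < P x} ^ (1 - (k : ℝ)⁻¹) ≤ Real.exp (d - r) :=
    calc cubePr n {x | a < P x} ^ (1 - (k : ℝ)⁻¹)
        ≤ Real.exp (-r) ^ (1 - (k : ℝ)⁻¹) :=
          Real.rpow_le_rpow (cubePr_nonneg _) (cubePr_lt_le_of_isQuantile ha)
            (sub_nonneg.2 (inv_le_one_of_one_le₀ one_le_k))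
      _ = Real.exp (r / k - r) := by
          rw [← Real.exp_mul]
          ring_nf
      _ ≤ Real.exp (d - r) := by
          gcongr
          exact div_le_of_le_mul₀ (by positivity) (by positivity) hrk
  calc r * (b - a) ^ 2 = Real.exp (r + 1) * (r * (Real.exp (-(r + 1)) * (b - a) ^ 2)) := by
        rw [mul_left_comm, ← mul_assoc (Real.exp (r + 1)), ← Real.exp_add, add_neg_cancel,
          Real.exp_zero, one_mul]
    _ ≤ Real.exp (r + 1) * (8 * 𝔼 x, {x | a < P x}.indicator 1 x * gradSq n P x) := by
        gcongr ?_ * ?_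
        exact mul_exp_mul_sq_quantile_sub_le hr ha hb hab
    _ ≤ Real.exp (r + 1) *
          (8 * (Real.exp (d - r) * (d * (2 * k - 1 : ℝ) ^ (d - 1) * 𝔼 x, P x ^ 2))) := by
        gcongr
        refine (expect_indicator_mul_gradSq_le hk hP _).trans ?_
        gcongr
    _ = 8 * Real.exp (d + 1) * (d * (2 * k - 1 : ℝ) ^ (d - 1) * 𝔼 x, P x ^ 2) := by
        rw [show (d + 1 : ℝ) = (r + 1) + (d - r) by ring, Real.exp_add _ (d - r)]
        ring

lemma eight_mul_exp_mul_le {d : ℕ} (hd : d ≠ 0) :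
    8 * Real.exp (d + 1) * ((d + 1) * 2 ^ (d - 1)) ≤ ((4 * Real.exp 1) ^ d) ^ 2 := by
  have one_le_d : (1 : ℝ) ≤ d := Nat.one_le_cast.2 (Nat.one_le_iff_ne_zero.2 hd)
  have succ_le_two_pow : (d + 1 : ℝ) ≤ 2 ^ d := mod_cast Nat.lt_two_pow_self
  have two_le_two_pow : (2 : ℝ) ≤ 2 ^ d := le_self_pow₀ one_le_two hd
  calc 8 * Real.exp (d + 1) * ((d + 1) * 2 ^ (d - 1))
      = 2 * 2 * Real.exp (d + 1) * ((d + 1) * 2 ^ d) := by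
        rw [← mul_pow_sub_one hd (2 : ℝ)]
        ring
    _ ≤ 2 ^ d * 2 ^ d * Real.exp (d + d) * (2 ^ d * 2 ^ d) := by gcongr
    _ = ((4 * Real.exp 1) ^ d) ^ 2 := by
        rw [Real.exp_add, ← Real.exp_one_pow, show (4 : ℝ) = 2 * 2 by norm_num,
          mul_pow (2 * 2), mul_pow 2]
        ring

lemma mul_sq_quantile_sub_le_of_one_le {d : ℕ} (hd : d ≠ 0) {P : (Fin n → Bool) → ℝ}
    (hP : IsPolyDeg n d P) {r a b : ℝ} (hr : 1 ≤ r)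
    (ha : IsQuantile n P r a) (hb : IsQuantile n P (r + 1) b) (hab : a ≤ b) :
    (r / d + 1) * (b - a) ^ 2 ≤
      ((4 * Real.exp 1) ^ d) ^ 2 * ((r / d + 1) ^ (d - 1) * 𝔼 x, P x ^ 2) := by
  have d_pos : (0 : ℝ) < d := Nat.cast_pos.2 (Nat.pos_of_ne_zero hd)
  have ratio_pos : 0 < r / d := by positivity
  set t := r / d + 1 with ht
  have d_mul_t_eq : d * t = r + d := by
    rw [ht]
    field_simp
  set k := ⌈r / d⌉₊
  have k_ne_zero : k ≠ 0 := (Nat.ceil_pos.2 ratio_pos).ne'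
  have one_le_k : (1 : ℝ) ≤ k := Nat.one_le_cast.2 (Nat.one_le_iff_ne_zero.2 k_ne_zero)
  have k_le_t : (k : ℝ) ≤ t := (Nat.ceil_lt_add_one ratio_pos.le).le
  have r_le_d_mul_k : r ≤ d * k := (div_le_iff₀' d_pos).1 (Nat.le_ceil _)
  refine le_of_mul_le_mul_left ?_ d_pos
  calc d * (t * (b - a) ^ 2) = (r + d) * (b - a) ^ 2 := by rw [← mul_assoc, d_mul_t_eq]
    _ ≤ (d + 1) * (r * (b - a) ^ 2) := by
        rw [← mul_assoc]
        gcongr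
        linarith [le_mul_of_one_le_right d_pos.le hr]
    _ ≤ (d + 1) * (8 * Real.exp (d + 1) * (d * (2 * k - 1 : ℝ) ^ (d - 1) * 𝔼 x, P x ^ 2)) := by
        gcongr ?_ * ?_
        exact mul_sq_quantile_sub_le k_ne_zero hP (by linarith) r_le_d_mul_k ha hb hab
    _ ≤ (d + 1) * (8 * Real.exp (d + 1) * (d * (2 * t) ^ (d - 1) * 𝔼 x, P x ^ 2)) := by
        gcongr <;> linarith
    _ = d * (8 * Real.exp (d + 1) * ((d + 1) * 2 ^ (d - 1)) *
          (t ^ (d - 1) * 𝔼 x, P x ^ 2)) := by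
        rw [mul_pow]
        ring
    _ ≤ d * (((4 * Real.exp 1) ^ d) ^ 2 * (t ^ (d - 1) * 𝔼 x, P x ^ 2)) := by
        gcongr ?_ * (?_ * ?_)
        exact eight_mul_exp_mul_le hd

lemma mul_rpow_half_sub_one_sq {t : ℝ} (ht : 0 < t) {d : ℕ} (hd : d ≠ 0) :
    t * (t ^ ((d : ℝ) / 2 - 1)) ^ 2 = t ^ (d - 1) := by
  rw [← Real.rpow_mul_natCast ht.le, mul_comm, ← Real.rpow_add_one ht.ne', ← Real.rpow_natCast,
    Nat.cast_pred (Nat.pos_of_ne_zero hd)]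
  congr 1
  push_cast
  ring

/-- Local tail bound: `a_{r+1} - a_r ≤ C^d (r/d + 1)^{d/2 - 1} ‖P(X)‖₂`. -/
theorem local_tail_bound :
    ∃ C : ℝ, 0 < C ∧
      ∀ (n d : ℕ), 1 ≤ n → 1 ≤ d →
        ∀ P : (Fin n → Bool) → ℝ, IsPolyDeg n d P →
          ∀ r : ℝ, 1 ≤ r →
            ∀ ar ar1 : ℝ, IsQuantile n P r ar → IsQuantile n P (r + 1) ar1 →
              ar1 - ar ≤
                C ^ d * (r / (d : ℝ) + 1) ^ ((d : ℝ) / 2 - 1) *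
                  Real.sqrt (cubeE n fun x => (P x) ^ 2) := by
  refine ⟨4 * Real.exp 1, by positivity, fun n d _ hd P hP r hr a b ha hb ↦ ?_⟩
  have d_ne_zero : d ≠ 0 := Nat.one_le_iff_ne_zero.1 hd
  have t_pos : 0 < r / d + 1 := by positivity
  rcases le_total b a with hba | hab
  · exact (sub_nonpos.2 hba).trans (by positivity)
  refine le_of_sq_le_sq ?_ (by positivity)
  refine le_of_mul_le_mul_left ?_ t_pos
  calc (r / d + 1) * (b - a) ^ 2
      ≤ ((4 * Real.exp 1) ^ d) ^ 2 * ((r / d + 1) ^ (d - 1) * 𝔼 x, P x ^ 2) :=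
        mul_sq_quantile_sub_le_of_one_le d_ne_zero hP hr ha hb hab
    _ = _ := by
        rw [← mul_rpow_half_sub_one_sq t_pos d_ne_zero, cubeE_eq_expect, mul_pow _ (√_),
          Real.sq_sqrt (by positivity)]
        ring
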